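/- If ρ is a separable density matrix on ℂ² ⊗ ℂ², then both c² ≤ 1 + (a² − b²) and c² ≤ 1 + (b² − a²) hold; equivalently c² ≤ 1 − |a² − b²|. Hence any two-qubit state whose correlation component lies beyond the hypersphere of squared radius 1 − |a² − b²| is entangled. -/

import Mathlib

open scoped ComplexOrder Kronecker

noncomputable section

/-- A density matrix: positive semidefinite with trace one. -/
def IsDensity {ι : Type*} [Fintype ι] (ρ : Matrix ι ι ℂ) : Prop :=
  ρ.PosSemidef ∧ ρ.trace = 1

/-- A separable state: a finite convex combination of tensor products of density
matrices; a non-separable density matrix is entangled. -/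
def Separable {m n : ℕ} (ρ : Matrix (Fin m × Fin n) (Fin m × Fin n) ℂ) : Prop :=
  ∃ (k : ℕ) (lam : Fin k → ℝ) (ρ1 : Fin k → Matrix (Fin m) (Fin m) ℂ)
    (ρ2 : Fin k → Matrix (Fin n) (Fin n) ℂ),
    (∀ i, 0 ≤ lam i) ∧ (∑ i, lam i = 1) ∧
    (∀ i, IsDensity (ρ1 i)) ∧ (∀ i, IsDensity (ρ2 i)) ∧
    ρ = ∑ i, (lam i : ℂ) • (ρ1 i ⊗ₖ ρ2 i)

/-- The three Pauli matrices `σ₁, σ₂, σ₃`. -/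
def pauli : Fin 3 → Matrix (Fin 2) (Fin 2) ℂ :=
  ![!![0, 1; 1, 0], !![0, -Complex.I; Complex.I, 0], !![1, 0; 0, -1]]

/-- `a² = Σᵢ Tr(ρ(σᵢ ⊗ I₂))²`, the squared length of the first Bloch component. -/
def aSq (ρ : Matrix (Fin 2 × Fin 2) (Fin 2 × Fin 2) ℂ) : ℝ :=
  ∑ i : Fin 3, ((ρ * (pauli i ⊗ₖ (1 : Matrix (Fin 2) (Fin 2) ℂ))).trace.re) ^ 2

/-- `b² = Σᵢ Tr(ρ(I₂ ⊗ σᵢ))²`, the squared length of the second Bloch component. -/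
def bSq (ρ : Matrix (Fin 2 × Fin 2) (Fin 2 × Fin 2) ℂ) : ℝ :=
  ∑ i : Fin 3, ((ρ * ((1 : Matrix (Fin 2) (Fin 2) ℂ) ⊗ₖ pauli i)).trace.re) ^ 2

/-- `c² = Σᵢⱼ Tr(ρ(σᵢ ⊗ σⱼ))²`, the squared length of the correlation component. -/
def cSq (ρ : Matrix (Fin 2 × Fin 2) (Fin 2 × Fin 2) ℂ) : ℝ :=
  ∑ i : Fin 3, ∑ j : Fin 3, ((ρ * (pauli i ⊗ₖ pauli j)).trace.re) ^ 2

/-!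
In a product mixture `∑ₚ wₚ ρₚ ⊗ ρ'ₚ` the three Bloch components are the averages of `uₚ`, `vₚ`
and `uₚ ⊗ vₚ`, where the Bloch vectors `uₚ`, `vₚ` of the factors lie in the unit ball. Drawing `p`
and `q` independently with law `w` and expanding the average of the nonnegative quantity
`(1 + ⟨uₚ, u_q⟩) (1 - ⟨vₚ, v_q⟩)` gives `1 + a² - b² - c²`; exchanging the two factors gives the
other bound.
-/

section TensorProduct

open scoped TensorProduct

variable {ι E F : Type*} [NormedAddCommGroup E] [InnerProductSpace ℝ E]
  [NormedAddCommGroup F] [InnerProductSpace ℝ F]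

theorem norm_sum_smul_sq (s : Finset ι) (w : ι → ℝ) (x : ι → E) :
    ‖∑ p ∈ s, w p • x p‖ ^ 2 = ∑ p ∈ s, ∑ q ∈ s, w p * w q * inner ℝ (x p) (x q) := by
  rw [← real_inner_self_eq_norm_sq, sum_inner]
  simp only [inner_sum, real_inner_smul_left, real_inner_smul_right, mul_assoc, mul_left_comm]

theorem norm_sum_smul_tmul_sq (s : Finset ι) (w : ι → ℝ) (x : ι → E) (y : ι → F) :
    ‖∑ p ∈ s, w p • x p ⊗ₜ[ℝ] y p‖ ^ 2 =
      ∑ p ∈ s, ∑ q ∈ s, w p * w q * (inner ℝ (x p) (x q) * inner ℝ (y p) (y q)) :=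
  norm_sum_smul_sq s w fun p ↦ x p ⊗ₜ[ℝ] y p

theorem abs_real_inner_le_one {x y : E} (hx : ‖x‖ ≤ 1) (hy : ‖y‖ ≤ 1) :
    |inner ℝ x y| ≤ 1 :=
  (abs_real_inner_le_norm x y).trans (mul_le_one₀ hx (norm_nonneg y) hy)

variable {s : Finset ι} {w : ι → ℝ} {x : ι → E} {y : ι → F}

theorem norm_sum_smul_tmul_sq_le (hw : ∀ p ∈ s, 0 ≤ w p) (hw₁ : ∑ p ∈ s, w p = 1)
    (hx : ∀ p ∈ s, ‖x p‖ ≤ 1) (hy : ∀ p ∈ s, ‖y p‖ ≤ 1) :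
    ‖∑ p ∈ s, w p • x p ⊗ₜ[ℝ] y p‖ ^ 2 ≤
      1 + ‖∑ p ∈ s, w p • x p‖ ^ 2 - ‖∑ p ∈ s, w p • y p‖ ^ 2 := by
  have pairwise_nonneg : 0 ≤ ∑ p ∈ s, ∑ q ∈ s,
      w p * w q * ((1 + inner ℝ (x p) (x q)) * (1 - inner ℝ (y p) (y q))) := by
    refine Finset.sum_nonneg fun p hp ↦ Finset.sum_nonneg fun q hq ↦ ?_
    have hxpq := neg_le_of_abs_le (abs_real_inner_le_one (hx p hp) (hx q hq))
    have hypq := le_of_abs_le (abs_real_inner_le_one (hy p hp) (hy q hq))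
    exact mul_nonneg (mul_nonneg (hw p hp) (hw q hq))
      (mul_nonneg (by linarith) (sub_nonneg.2 hypq))
  have one_eq : (1 : ℝ) = ∑ p ∈ s, ∑ q ∈ s, w p * w q := by
    rw [← Finset.sum_mul_sum, hw₁, one_mul]
  have expansion : ∑ p ∈ s, ∑ q ∈ s,
      w p * w q * ((1 + inner ℝ (x p) (x q)) * (1 - inner ℝ (y p) (y q))) =
      1 + ‖∑ p ∈ s, w p • x p‖ ^ 2 - ‖∑ p ∈ s, w p • y p‖ ^ 2 -
        ‖∑ p ∈ s, w p • x p ⊗ₜ[ℝ] y p‖ ^ 2 := by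
    conv_rhs => rw [one_eq]
    simp only [norm_sum_smul_sq, norm_sum_smul_tmul_sq, ← Finset.sum_add_distrib,
      ← Finset.sum_sub_distrib]
    refine Finset.sum_congr rfl fun p _ ↦ Finset.sum_congr rfl fun q _ ↦ ?_
    ring
  exact sub_nonneg.1 (expansion ▸ pairwise_nonneg)

theorem norm_sum_smul_tmul_comm (s : Finset ι) (w : ι → ℝ) (x : ι → E) (y : ι → F) :
    ‖∑ p ∈ s, w p • y p ⊗ₜ[ℝ] x p‖ = ‖∑ p ∈ s, w p • x p ⊗ₜ[ℝ] y p‖ := by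
  rw [← TensorProduct.norm_comm]
  simp only [map_sum, map_smul, TensorProduct.comm_tmul]

theorem norm_sum_smul_tmul_sq_add_abs_le_one (hw : ∀ p ∈ s, 0 ≤ w p)
    (hw₁ : ∑ p ∈ s, w p = 1) (hx : ∀ p ∈ s, ‖x p‖ ≤ 1) (hy : ∀ p ∈ s, ‖y p‖ ≤ 1) :
    ‖∑ p ∈ s, w p • x p ⊗ₜ[ℝ] y p‖ ^ 2 +
      |‖∑ p ∈ s, w p • x p‖ ^ 2 - ‖∑ p ∈ s, w p • y p‖ ^ 2| ≤ 1 := by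
  have hxy := norm_sum_smul_tmul_sq_le hw hw₁ hx hy
  have hyx := norm_sum_smul_tmul_sq_le hw hw₁ hy hx
  rw [norm_sum_smul_tmul_comm] at hyx
  rw [← le_sub_iff_add_le', abs_le]
  constructor <;> linarith

theorem norm_sum_smul_tmul_sq_eq_sum {m n : Type*} [Fintype m] [Fintype n] (s : Finset ι)
    (w : ι → ℝ) (x : ι → EuclideanSpace ℝ m) (y : ι → EuclideanSpace ℝ n) :
    ‖∑ p ∈ s, w p • x p ⊗ₜ[ℝ] y p‖ ^ 2 =
      ∑ i, ∑ j, (∑ p ∈ s, w p * (x p i * y p j)) ^ 2 := by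
  classical
  rw [← ((EuclideanSpace.basisFun m ℝ).tensorProduct
    (EuclideanSpace.basisFun n ℝ)).sum_sq_inner_right, Fintype.sum_prod_type]
  simp [inner_sum, real_inner_smul_right, EuclideanSpace.inner_single_left]

end TensorProduct

section Trace

variable {m n R : Type*} [Fintype m] [Fintype n]

theorem isSelfAdjoint_trace_mul [CommSemiring R] [StarRing R] {A B : Matrix n n R}
    (hA : A.IsHermitian) (hB : B.IsHermitian) : IsSelfAdjoint (A * B).trace := by
  rw [isSelfAdjoint_iff, ← Matrix.trace_conjTranspose, Matrix.conjTranspose_mul, hA.eq, hB.eq,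
    Matrix.trace_mul_comm]

theorem trace_sum_smul_kronecker_mul_kronecker {ι : Type*} [CommSemiring R] (s : Finset ι)
    (c : ι → R) (A : ι → Matrix m m R) (B : ι → Matrix n n R) (P : Matrix m m R)
    (Q : Matrix n n R) :
    ((∑ k ∈ s, c k • (A k ⊗ₖ B k)) * (P ⊗ₖ Q)).trace =
      ∑ k ∈ s, c k * ((A k * P).trace * (B k * Q).trace) := by
  simp only [Finset.sum_mul, Matrix.trace_sum, Matrix.smul_mul, Matrix.trace_smul,
    ← Matrix.mul_kronecker_mul, Matrix.trace_kronecker, smul_eq_mul]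

end Trace

theorem isHermitian_pauli (i : Fin 3) : (pauli i).IsHermitian := by
  fin_cases i <;> ext j k <;> fin_cases j <;> fin_cases k <;> simp [pauli]

theorem sum_trace_mul_pauli_sq (M : Matrix (Fin 2) (Fin 2) ℂ) :
    ∑ i, (M * pauli i).trace ^ 2 = M.trace ^ 2 - 4 * M.det := by
  simp only [pauli, Fin.sum_univ_three, Fin.sum_univ_two, Matrix.trace_fin_two,
    Matrix.det_fin_two, Matrix.mul_apply, Matrix.of_apply, Matrix.cons_val, Matrix.cons_val',
    Matrix.cons_val_fin_one, Matrix.cons_val_zero, Matrix.cons_val_one]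
  linear_combination (M 0 1 - M 1 0) ^ 2 * Complex.I_sq

/-- The Bloch vector `(Tr(M σᵢ))ᵢ` of a qubit state `M`. Taking real parts loses nothing for
Hermitian `M`; the Euclidean norm makes the state space the unit ball. -/
def blochVector (M : Matrix (Fin 2) (Fin 2) ℂ) : EuclideanSpace ℝ (Fin 3) :=
  WithLp.toLp 2 fun i ↦ (M * pauli i).trace.re

theorem blochVector_apply (M : Matrix (Fin 2) (Fin 2) ℂ) (i : Fin 3) :
    blochVector M i = (M * pauli i).trace.re := rfl

theorem ofReal_blochVector {M : Matrix (Fin 2) (Fin 2) ℂ} (hM : M.IsHermitian) (i : Fin 3) :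
    (blochVector M i : ℂ) = (M * pauli i).trace :=
  Complex.conj_eq_iff_re.1 (isSelfAdjoint_trace_mul hM (isHermitian_pauli i))

theorem ofReal_norm_blochVector_sq {M : Matrix (Fin 2) (Fin 2) ℂ} (hM : M.IsHermitian) :
    ((‖blochVector M‖ ^ 2 : ℝ) : ℂ) = M.trace ^ 2 - 4 * M.det := by
  rw [EuclideanSpace.real_norm_sq_eq, ← sum_trace_mul_pauli_sq]
  push_cast
  simp only [ofReal_blochVector hM]

theorem norm_blochVector_le_one {M : Matrix (Fin 2) (Fin 2) ℂ} (hM : IsDensity M) :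
    ‖blochVector M‖ ≤ 1 := by
  obtain ⟨hpos, htr⟩ := hM
  have hsq : ((‖blochVector M‖ ^ 2 : ℝ) : ℂ) ≤ (1 : ℝ) := by
    rw [ofReal_norm_blochVector_sq hpos.isHermitian, htr, one_pow, Complex.ofReal_one]
    exact sub_le_self 1 (mul_nonneg zero_le_four hpos.det_nonneg)
  exact (sq_le_one_iff₀ (norm_nonneg _)).1 (Complex.real_le_real.1 hsq)

section ProductMixture

open scoped TensorProduct

variable {ι : Type*} (s : Finset ι) (w : ι → ℝ) {A B : ι → Matrix (Fin 2) (Fin 2) ℂ}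

theorem aSq_sum_smul_kronecker (hB : ∀ k ∈ s, (B k).trace = 1) :
    aSq (∑ k ∈ s, (w k : ℂ) • (A k ⊗ₖ B k)) = ‖∑ k ∈ s, w k • blochVector (A k)‖ ^ 2 := by
  rw [EuclideanSpace.real_norm_sq_eq, aSq]
  refine Finset.sum_congr rfl fun i _ ↦ congrArg (· ^ 2) ?_
  rw [trace_sum_smul_kronecker_mul_kronecker, Complex.re_sum, WithLp.ofLp_sum, Finset.sum_apply]
  refine Finset.sum_congr rfl fun k hk ↦ ?_
  rw [mul_one, hB k hk, mul_one, Complex.re_ofReal_mul, PiLp.smul_apply, blochVector_apply,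
    smul_eq_mul]

theorem bSq_sum_smul_kronecker (hA : ∀ k ∈ s, (A k).trace = 1) :
    bSq (∑ k ∈ s, (w k : ℂ) • (A k ⊗ₖ B k)) = ‖∑ k ∈ s, w k • blochVector (B k)‖ ^ 2 := by
  rw [EuclideanSpace.real_norm_sq_eq, bSq]
  refine Finset.sum_congr rfl fun i _ ↦ congrArg (· ^ 2) ?_
  rw [trace_sum_smul_kronecker_mul_kronecker, Complex.re_sum, WithLp.ofLp_sum, Finset.sum_apply]
  refine Finset.sum_congr rfl fun k hk ↦ ?_
  rw [mul_one, hA k hk, one_mul, Complex.re_ofReal_mul, PiLp.smul_apply, blochVector_apply,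
    smul_eq_mul]

theorem cSq_sum_smul_kronecker (hA : ∀ k ∈ s, (A k).IsHermitian) :
    cSq (∑ k ∈ s, (w k : ℂ) • (A k ⊗ₖ B k)) =
      ‖∑ k ∈ s, w k • blochVector (A k) ⊗ₜ[ℝ] blochVector (B k)‖ ^ 2 := by
  rw [norm_sum_smul_tmul_sq_eq_sum, cSq]
  refine Finset.sum_congr rfl fun i _ ↦ Finset.sum_congr rfl fun j _ ↦ congrArg (· ^ 2) ?_
  rw [trace_sum_smul_kronecker_mul_kronecker, Complex.re_sum]
  refine Finset.sum_congr rfl fun k hk ↦ ?_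
  rw [← ofReal_blochVector (hA k hk), Complex.re_ofReal_mul, Complex.re_ofReal_mul,
    ← blochVector_apply]

end ProductMixture

theorem cSq_add_abs_le_one_of_separable {ρ : Matrix (Fin 2 × Fin 2) (Fin 2 × Fin 2) ℂ}
    (h : Separable ρ) : cSq ρ + |aSq ρ - bSq ρ| ≤ 1 := by
  obtain ⟨k, w, ρ₁, ρ₂, hw, hw₁, hρ₁, hρ₂, rfl⟩ := h
  rw [cSq_sum_smul_kronecker _ _ fun i _ ↦ (hρ₁ i).1.isHermitian,
    aSq_sum_smul_kronecker _ _ fun i _ ↦ (hρ₂ i).2,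
    bSq_sum_smul_kronecker _ _ fun i _ ↦ (hρ₁ i).2]
  exact norm_sum_smul_tmul_sq_add_abs_le_one (fun i _ ↦ hw i) hw₁
    (fun i _ ↦ norm_blochVector_le_one (hρ₁ i)) (fun i _ ↦ norm_blochVector_le_one (hρ₂ i))

/-- A separable two-qubit state satisfies `c² ≤ 1 + (a² − b²)` and
`c² ≤ 1 + (b² − a²)`, i.e. `c² ≤ 1 − |a² − b²|`; hence any state whose correlation
component lies beyond the hypersphere of squared radius `1 − |a² − b²|` is entangled. -/
theorem stmt16 (ρ : Matrix (Fin 2 × Fin 2) (Fin 2 × Fin 2) ℂ) (hρ : IsDensity ρ) :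
    (Separable ρ →
      cSq ρ ≤ 1 + (aSq ρ - bSq ρ) ∧ cSq ρ ≤ 1 + (bSq ρ - aSq ρ) ∧
      cSq ρ ≤ 1 - |aSq ρ - bSq ρ|) ∧
    (1 - |aSq ρ - bSq ρ| < cSq ρ → ¬ Separable ρ) := by
  refine ⟨fun h ↦ ?_, fun hlt h ↦ ?_⟩
  · have hle := cSq_add_abs_le_one_of_separable h
    obtain ⟨hlower, hupper⟩ := abs_le.1 (le_sub_iff_add_le'.2 hle)
    exact ⟨by linarith, by linarith, le_sub_iff_add_le.2 hle⟩
  · exact hlt.not_ge (le_sub_iff_add_le.2 (cSq_add_abs_le_one_of_separable h))
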